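/- Let (X,T) be a minimal topological dynamical system and suppose (x,y) ∈ RP. Then for every ε > 0 and every finite family z_1,…,z_k of points of X there exist z'_1,…,z'_k ∈ X and n ∈ ℤ such that d(T^n y, x) < ε and, for every i ∈ {1,…,k}, d(z'_i, z_i) < ε and d(T^n z'_i, z_i) < ε. -/

import Mathlib

open Filter Topology

/-- The `n`-th iterate (`n : ℤ`) of a homeomorphism `T : X → X`. -/
def iterZ {X : Type*} [TopologicalSpace X] (T : X ≃ₜ X) (n : ℤ) : X → X :=
  fun x => (T.toEquiv ^ n) x

section Defs

variable {X : Type*} [TopologicalSpace X]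

/-- The set of parallelograms `𝒫`: the closure in `X⁴` of
`{(x, Tᵐx, Tⁿx, Tᵐ⁺ⁿx) : x ∈ X, m, n ∈ ℤ}`. -/
def Para (T : X ≃ₜ X) : Set (X × X × X × X) :=
  closure {q | ∃ (x : X) (m n : ℤ),
    q = (x, iterZ T m x, iterZ T n x, iterZ T (m + n) x)}

/-- The set of parallelepipeds `𝒬`: the closure in `X⁸ = X⁴ × X⁴` of
`{(x, Tᵐx, Tⁿx, Tᵐ⁺ⁿx, Tᵖx, Tᵐ⁺ᵖx, Tⁿ⁺ᵖx, Tᵐ⁺ⁿ⁺ᵖx) : x ∈ X, m, n, p ∈ ℤ}`. -/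
def Pip (T : X ≃ₜ X) : Set ((X × X × X × X) × (X × X × X × X)) :=
  closure {q | ∃ (x : X) (m n p : ℤ),
    q = ((x, iterZ T m x, iterZ T n x, iterZ T (m + n) x),
         (iterZ T p x, iterZ T (m + p) x, iterZ T (n + p) x, iterZ T (m + n + p) x))}

end Defs

section MetricDefs

variable {X : Type*} [MetricSpace X]

/-- `(X, T)` is transitive: some point has dense orbit `{Tⁿx : n ∈ ℤ}`. -/
def IsTransitive (T : X ≃ₜ X) : Prop :=
  ∃ x : X, Dense (Set.range fun n : ℤ => iterZ T n x)

/-- `(X, T)` is minimal: every point has dense orbit. -/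
def IsMinimal (T : X ≃ₜ X) : Prop :=
  ∀ x : X, Dense (Set.range fun n : ℤ => iterZ T n x)

/-- `(x, y)` is a proximal pair: `inf_{n ∈ ℤ} d(Tⁿx, Tⁿy) = 0`. -/
def ProximalPair (T : X ≃ₜ X) (x y : X) : Prop :=
  ⨅ n : ℤ, dist (iterZ T n x) (iterZ T n y) = 0

/-- `(X, T)` is distal: every pair of distinct points is distal,
i.e. `inf_{n ∈ ℤ} d(Tⁿx, Tⁿy) > 0`. -/
def IsDistal (T : X ≃ₜ X) : Prop :=
  ∀ x y : X, x ≠ y → 0 < ⨅ n : ℤ, dist (iterZ T n x) (iterZ T n y)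

/-- The regionally proximal relation `RP`. -/
def RP (T : X ≃ₜ X) (x y : X) : Prop :=
  ∀ ε > 0, ∃ x' y' : X, ∃ n : ℤ,
    dist x' x < ε ∧ dist y' y < ε ∧ dist (iterZ T n x') (iterZ T n y') < ε

/-- The doubly regionally proximal relation `RP²`. -/
def RP2 (T : X ≃ₜ X) (x y : X) : Prop :=
  ∀ ε > 0, ∃ x' y' : X, ∃ m n : ℤ,
    dist x' x < ε ∧ dist y' y < ε ∧
    dist (iterZ T m x') (iterZ T m y') < ε ∧
    dist (iterZ T n x') (iterZ T n y') < ε ∧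
    dist (iterZ T (m + n) x') (iterZ T (m + n) y') < ε

/-- The strongly doubly regionally proximal relation `RP²ₛ`. -/
def RP2S (T : X ≃ₜ X) (x y : X) : Prop :=
  ∀ ε > 0, ∃ x' y' : X, ∃ m n : ℤ,
    dist x' x < ε ∧ dist y' y < ε ∧
    dist (iterZ T m x') y < ε ∧ dist (iterZ T n x') y < ε ∧
    dist (iterZ T (m + n) x') y < ε ∧
    dist (iterZ T m y') y < ε ∧ dist (iterZ T n y') y < ε ∧
    dist (iterZ T (m + n) y') y < ε

end MetricDefs

open MeasureTheory

lemma iterZ_add' {X : Type*} [TopologicalSpace X] (T : X ≃ₜ X) (m n : ℤ) (x : X) :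
    iterZ T (m + n) x = iterZ T m (iterZ T n x) := by
  simp [iterZ, zpow_add]

lemma iterZ_zero' {X : Type*} [TopologicalSpace X] (T : X ≃ₜ X) (x : X) :
    iterZ T 0 x = x := by
  simp [iterZ]

lemma iterZ_one' {X : Type*} [TopologicalSpace X] (T : X ≃ₜ X) (x : X) :
    iterZ T 1 x = T x := by
  simp [iterZ]

lemma iterZ_neg_one' {X : Type*} [TopologicalSpace X] (T : X ≃ₜ X) (x : X) :
    iterZ T (-1) x = T.symm x := by
  simp [iterZ]

lemma iterZ_neg_self {X : Type*} [TopologicalSpace X] (T : X ≃ₜ X) (n : ℤ) (x : X) :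
    iterZ T (-n) (iterZ T n x) = x := by
  rw [← iterZ_add', neg_add_cancel, iterZ_zero']

lemma iterZ_continuous {X : Type*} [TopologicalSpace X] (T : X ≃ₜ X) (n : ℤ) :
    Continuous (iterZ T n) := by
  induction n using Int.induction_on with
  | zero => exact continuous_id.congr (fun x => (iterZ_zero' T x).symm)
  | succ n ih =>
    refine (ih.comp T.continuous).congr (fun x => ?_)
    rw [iterZ_add', iterZ_one']; rfl
  | pred n ih =>
    refine (ih.comp T.symm.continuous).congr (fun x => ?_)
    rw [sub_eq_add_neg, iterZ_add', iterZ_neg_one']; rfl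

lemma iterZ_mp {X : Type*} [TopologicalSpace X] [MeasurableSpace X] [BorelSpace X]
    (T : X ≃ₜ X) (μ : Measure X) (h : MeasurePreserving T μ μ) (n : ℤ) :
    MeasurePreserving (iterZ T n) μ μ := by
  induction n using Int.induction_on with
  | zero =>
    have : iterZ T 0 = id := funext (iterZ_zero' T)
    rw [this]; exact MeasurePreserving.id μ
  | succ n ih =>
    have : iterZ T (n + 1) = iterZ T n ∘ T := by
      funext x; rw [iterZ_add', iterZ_one']; rfl
    rw [this]; exact ih.comp h
  | pred n ih =>
    have : iterZ T (-n - 1) = iterZ T (-n) ∘ T.symm := by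
      funext x; rw [sub_eq_add_neg, iterZ_add', iterZ_neg_one']; rfl
    rw [this]
    have hTe : MeasurePreserving T.toMeasurableEquiv μ μ := h
    exact ih.comp hTe.symm

/-- Krylov-Bogolyubov. -/
lemma exists_invariant {X : Type*} [MetricSpace X] [CompactSpace X] [Nonempty X]
    [MeasurableSpace X] [BorelSpace X] (T : X ≃ₜ X) :
    ∃ μ : Measure X, IsProbabilityMeasure μ ∧ MeasurePreserving T μ μ := by
  obtain ⟨x0⟩ := ‹Nonempty X›
  let m : ℕ → Measure X := fun N =>
    ((N : ENNReal) + 1)⁻¹ • ∑ i ∈ Finset.range (N + 1), Measure.dirac (T^[i] x0)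
  have hm : ∀ N, IsProbabilityMeasure (m N) := by
    intro N
    constructor
    simp only [m, Measure.smul_apply, Measure.finsetSum_apply, smul_eq_mul, measure_univ,
      Finset.sum_const, Finset.card_range, nsmul_eq_mul, mul_one]
    push_cast
    exact ENNReal.inv_mul_cancel (by simp) (by simp)
  have hint : ∀ N (f : BoundedContinuousFunction X ℝ), ∫ x, f x ∂(m N) =
      ((N : ℝ) + 1)⁻¹ * ∑ i ∈ Finset.range (N + 1), f (T^[i] x0) := by
    intro N f
    simp only [m]
    rw [integral_smul_measure, integral_finsetSum_measure]
    · simp only [integral_dirac, smul_eq_mul]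
      congr 1
      rw [ENNReal.toReal_inv, ENNReal.toReal_add (by simp) (by simp)]
      simp
    · intro i _
      exact f.integrable _
  let p : ℕ → ProbabilityMeasure X := fun N => ⟨m N, hm N⟩
  let F : Ultrafilter ℕ := Ultrafilter.of atTop
  have hF : (F : Filter ℕ) ≤ atTop := Ultrafilter.of_le _
  obtain ⟨μ, -, hμ⟩ := isCompact_univ.ultrafilter_le_nhds (F.map p) (by simp)
  have hlim : Tendsto p F (𝓝 μ) := hμ
  rw [ProbabilityMeasure.tendsto_iff_forall_integral_tendsto] at hlim
  refine ⟨μ, inferInstance, T.continuous.measurable, ?_⟩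
  have : IsProbabilityMeasure (Measure.map T (μ : Measure X)) :=
    Measure.isProbabilityMeasure_map T.continuous.measurable.aemeasurable
  refine ext_of_forall_integral_eq_of_IsFiniteMeasure (fun f => ?_)
  rw [integral_map T.continuous.measurable.aemeasurable
    f.continuous.measurable.aestronglyMeasurable]
  let g : BoundedContinuousFunction X ℝ := f.compContinuous ⟨T, T.continuous⟩
  have h1 := hlim g
  have h2 := hlim f
  have h3 := h1.sub h2
  have h4 : Tendsto (fun N => ∫ x, g x ∂(p N : Measure X) - ∫ x, f x ∂(p N : Measure X)) F (𝓝 0) := by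
    refine Tendsto.mono_left ?_ hF
    have h5 : Tendsto (fun N : ℕ => ((N : ℝ) + 1)⁻¹ * (2 * ‖f‖)) atTop (𝓝 (0 * (2 * ‖f‖))) := by
      refine Tendsto.mul_const _ ?_
      simpa [one_div] using tendsto_one_div_add_atTop_nhds_zero_nat (𝕜 := ℝ)
    rw [zero_mul] at h5
    refine squeeze_zero_norm (fun N => ?_) h5
    change ‖∫ x, g x ∂(m N) - ∫ x, f x ∂(m N)‖ ≤ _
    rw [hint, hint, ← mul_sub, ← Finset.sum_sub_distrib]
    have : ∀ i, g (T^[i] x0) - f (T^[i] x0) = f (T^[i+1] x0) - f (T^[i] x0) := by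
      intro i
      rw [Function.iterate_succ_apply']; rfl
    simp_rw [this]
    rw [Finset.sum_range_sub (fun i => f (T^[i] x0)), norm_mul, norm_inv]
    have e : ‖(N : ℝ) + 1‖ = N + 1 := by
      rw [Real.norm_eq_abs, abs_of_nonneg (by positivity)]
    rw [e]
    gcongr
    refine (norm_sub_le _ _).trans ?_
    have := f.norm_coe_le_norm (T^[N+1] x0)
    have := f.norm_coe_le_norm (T^[0] x0)
    linarith
  have := tendsto_nhds_unique h3 h4
  have e : ∫ x, g x ∂(μ : Measure X) = ∫ x, f x ∂(μ : Measure X) := sub_eq_zero.mp this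
  exact e

lemma pos_of_minimal {X : Type*} [MetricSpace X] [MeasurableSpace X] [BorelSpace X]
    (T : X ≃ₜ X) (hmin : IsMinimal T) (μ : Measure X) [IsProbabilityMeasure μ]
    (h : MeasurePreserving T μ μ) (z : X) (ε : ℝ) (hε : 0 < ε) :
    μ (Metric.ball z ε) ≠ 0 := by
  intro h0
  have hU : (Set.univ : Set X) ⊆ ⋃ n : ℤ, iterZ T n ⁻¹' Metric.ball z ε := by
    intro w _
    obtain ⟨_, ⟨n, rfl⟩, hn⟩ := (hmin w).exists_dist_lt z hε
    exact Set.mem_iUnion.2 ⟨n, by rw [Set.mem_preimage, Metric.mem_ball, dist_comm]; exact hn⟩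
  have h1 : μ (⋃ n : ℤ, iterZ T n ⁻¹' Metric.ball z ε) = 0 := by
    rw [measure_iUnion_null_iff]
    intro n
    rw [(iterZ_mp T μ h n).measure_preimage Metric.isOpen_ball.measurableSet.nullMeasurableSet, h0]
  have := measure_mono_null hU h1
  simp at this

/-- McMahon's lemma. -/
lemma mcmahon {X Y : Type*} [MetricSpace X] [CompactSpace X]
    [MetricSpace Y] [CompactSpace Y] [MeasurableSpace Y] [BorelSpace Y]
    (T : X ≃ₜ X) (hmin : IsMinimal T) (ν : Measure Y) [IsFiniteMeasure ν]
    (S : ℤ → Y → Y) (hS : ∀ n, MeasurePreserving (S n) ν ν)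
    (N : Set (X × Y)) (hN : IsClosed N)
    (hinv : ∀ n a b, (iterZ T n a, S n b) ∈ N ↔ (a, b) ∈ N)
    (x y : X) (hxy : RP T x y) : ν ({b | (x, b) ∈ N} \ {b | (y, b) ∈ N}) = 0 := by
  let s : X → Set Y := fun a => {b | (a, b) ∈ N}
  have hsc : ∀ a, IsClosed (s a) := fun a => hN.preimage (by fun_prop)
  have hsm : ∀ a, MeasurableSet (s a) := fun a => (hsc a).measurableSet
  have hpre : ∀ n a, S n ⁻¹' (s (iterZ T n a)) = s a := by
    intro n a; ext b; exact hinv n a b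
  have hg : ∀ n a, ν (s (iterZ T n a)) = ν (s a) := by
    intro n a
    rw [← hpre n a, (hS n).measure_preimage (hsm _).nullMeasurableSet]
  have husc : ∀ a (O : Set Y), IsOpen O → s a ⊆ O → ∃ r > 0, ∀ a', dist a' a < r → s a' ⊆ O := by
    intro a O hO hsO
    have hc : IsClosed (Prod.fst '' (N ∩ (Prod.snd ⁻¹' Oᶜ))) :=
      ((hN.inter (hO.isClosed_compl.preimage continuous_snd)).isCompact.image
        continuous_fst).isClosed
    have ha : a ∈ (Prod.fst '' (N ∩ (Prod.snd ⁻¹' Oᶜ)))ᶜ := by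
      rintro ⟨⟨a', b⟩, ⟨h1, h2⟩, rfl⟩
      exact h2 (hsO h1)
    obtain ⟨r, hr, hb⟩ := Metric.isOpen_iff.1 hc.isOpen_compl a ha
    refine ⟨r, hr, fun a' ha' b hb' => ?_⟩
    by_contra hbO
    exact hb (Metric.mem_ball.2 ha') ⟨(a', b), ⟨hb', hbO⟩, rfl⟩
  have hreg : ∀ a (δ : ENNReal), δ ≠ 0 → ∃ O, IsOpen O ∧ s a ⊆ O ∧ ν O ≤ ν (s a) + δ := by
    intro a δ hδ
    obtain ⟨O, h1, h2, h3⟩ := (s a).exists_isOpen_le_add ν hδ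
    exact ⟨O, h2, h1, h3⟩
  have hle : ∀ a a', ν (s a') ≤ ν (s a) := by
    intro a a'
    refine ENNReal.le_of_forall_pos_le_add (fun δ hδ _ => ?_)
    obtain ⟨O, hO, hsO, hνO⟩ := hreg a δ (by simpa using hδ.ne')
    obtain ⟨r, hr, hsub⟩ := husc a O hO hsO
    obtain ⟨_, ⟨n, rfl⟩, hn⟩ := (hmin a').exists_dist_lt a hr
    rw [← hg n a']
    exact (measure_mono (hsub _ (by rw [dist_comm]; exact hn))).trans hνO
  have heq : ∀ a a', ν (s a) = ν (s a') := fun a a' => le_antisymm (hle _ _) (hle _ _)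
  have hsymm : ∀ a a', ν (s a \ s a') = ν (s a' \ s a) := by
    intro a a'
    have h1 := measure_inter_add_diff (μ := ν) (s a) (hsm a')
    have h2 := measure_inter_add_diff (μ := ν) (s a') (hsm a)
    rw [heq a a', ← h2, Set.inter_comm] at h1
    exact (ENNReal.add_right_inj (measure_ne_top _ _)).1 h1
  have htri : ∀ a b c, ν (s a \ s c) ≤ ν (s a \ s b) + ν (s b \ s c) := by
    intro a b c
    refine (measure_mono ?_).trans (measure_union_le _ _)
    intro w hw
    by_cases hb : w ∈ s b
    · exact Or.inr ⟨hb, hw.2⟩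
    · exact Or.inl ⟨hw.1, hb⟩
  have hAinv : ∀ n a b, ν (s (iterZ T n a) \ s (iterZ T n b)) = ν (s a \ s b) := by
    intro n a b
    rw [← hpre n a, ← hpre n b, ← Set.preimage_diff,
      (hS n).measure_preimage ((hsm _).diff (hsm _)).nullMeasurableSet]
  have hloc : ∀ (δ : ENNReal), δ ≠ 0 → ∀ a, ∃ r > 0, ∀ a', dist a' a < r → ν (s a' \ s a) ≤ δ := by
    intro δ hδ a
    obtain ⟨O, hO, hsO, hνO⟩ := hreg a δ hδ
    obtain ⟨r, hr, hsub⟩ := husc a O hO hsO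
    refine ⟨r, hr, fun a' ha' => ?_⟩
    refine (measure_mono (Set.diff_subset_diff_left (hsub a' ha'))).trans ?_
    rw [measure_sdiff hsO (hsm a).nullMeasurableSet (measure_ne_top _ _)]
    exact tsub_le_iff_left.2 hνO
  have hunif : ∀ (δ : ENNReal), δ ≠ 0 → ∃ r > 0, ∀ a b, dist a b < r → ν (s a \ s b) ≤ δ + δ := by
    intro δ hδ
    choose r hr hA using hloc δ hδ
    obtain ⟨e, he, hL⟩ := lebesgue_number_lemma_of_metric (s := (Set.univ : Set X))
      (c := fun u => Metric.ball u (r u)) isCompact_univ (fun _ => Metric.isOpen_ball)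
      (fun w _ => Set.mem_iUnion.2 ⟨w, Metric.mem_ball_self (hr w)⟩)
    refine ⟨e, he, fun a b hab => ?_⟩
    obtain ⟨u, hu⟩ := hL a trivial
    refine (htri a u b).trans (add_le_add ?_ ?_)
    · exact hA u a (hu (Metric.mem_ball_self he))
    · rw [hsymm]
      exact hA u b (hu (by rw [Metric.mem_ball, dist_comm]; exact hab))
  change ν (s x \ s y) = 0
  refine le_antisymm (ENNReal.le_of_forall_pos_le_add (fun δ hδ _ => ?_)) bot_le
  obtain ⟨r, hr, hA⟩ := hunif (δ / 6) (by simpa using hδ.ne')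
  obtain ⟨x', y', n, h1, h2, h3⟩ := hxy r hr
  have e1 := hA x x' (by rw [dist_comm]; exact h1)
  have e2 := hA _ _ h3
  have e3 := hA y' y h2
  rw [hAinv] at e2
  calc ν (s x \ s y) ≤ ν (s x \ s x') + (ν (s x' \ s y') + ν (s y' \ s y)) :=
        (htri x x' y).trans (by gcongr; exact htri _ _ _)
    _ ≤ ((δ : ENNReal) / 6 + δ / 6) + ((δ / 6 + δ / 6) + (δ / 6 + δ / 6)) := by gcongr
    _ = 6 * ((δ : ENNReal) / 6) := by ring
    _ = 0 + δ := by rw [zero_add, ENNReal.mul_div_cancel (by simp) (by simp)]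

/-- Strengthened regional proximality in minimal systems (corollary of Auslander). -/
theorem stmt5 {X : Type*} [MetricSpace X] [CompactSpace X] [Nonempty X]
    (T : X ≃ₜ X) (hmin : IsMinimal T) (x y : X) (hxy : RP T x y)
    (ε : ℝ) (hε : 0 < ε) (k : ℕ) (z : Fin k → X) :
    ∃ (z' : Fin k → X) (n : ℤ), dist (iterZ T n y) x < ε ∧
      ∀ i : Fin k, dist (z' i) (z i) < ε ∧ dist (iterZ T n (z' i)) (z i) < ε := by
  letI : MeasurableSpace X := borel X
  haveI : BorelSpace X := ⟨rfl⟩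
  obtain ⟨μ, hμ, hT⟩ := exists_invariant T
  have hyx : RP T y x := by
    intro e he
    obtain ⟨x', y', n, h1, h2, h3⟩ := hxy e he
    exact ⟨y', x', n, h2, h1, by rw [dist_comm]; exact h3⟩
  let ν : Measure (Fin k → X) := Measure.pi (fun _ => μ)
  let S : ℤ → (Fin k → X) → (Fin k → X) := fun n w i => iterZ T n (w i)
  have hS : ∀ n, MeasurePreserving (S n) ν ν := fun n =>
    measurePreserving_pi _ _ (fun _ => iterZ_mp T μ hT n)
  have hSc : ∀ n, Continuous (S n) := fun n =>
    continuous_pi (fun i => (iterZ_continuous T n).comp (continuous_apply i))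
  let U : Set (Fin k → X) := Set.univ.pi (fun i => Metric.ball (z i) ε)
  have hUo : IsOpen U := isOpen_set_pi Set.finite_univ (fun _ _ => Metric.isOpen_ball)
  have hνU : ν U ≠ 0 := by
    simp only [ν, U, Measure.pi_pi]
    exact Finset.prod_ne_zero_iff.2 (fun i _ => pos_of_minimal T hmin μ hT (z i) ε hε)
  let G : Set (X × (Fin k → X)) := {q | ∃ n : ℤ, ∃ u ∈ U, q = (iterZ T n y, S n u)}
  have hmap : ∀ n a b, (a, b) ∈ closure G → (iterZ T n a, S n b) ∈ closure G := by
    intro n a b h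
    refine map_mem_closure (f := Prod.map (iterZ T n) (S n))
      ((iterZ_continuous T n).prodMap (hSc n)) h ?_
    rintro _ ⟨m, u, hu, rfl⟩
    refine ⟨n + m, u, hu, ?_⟩
    simp [S, Prod.map, iterZ_add']
  have hinv : ∀ n a b, (iterZ T n a, S n b) ∈ closure G ↔ (a, b) ∈ closure G := by
    intro n a b
    refine ⟨fun h => ?_, hmap n a b⟩
    have := hmap (-n) _ _ h
    simpa [S, iterZ_neg_self] using this
  have key := mcmahon T hmin ν S hS (closure G) isClosed_closure hinv y x hyx
  have hex : ∃ u ∈ U, (x, u) ∈ closure G := by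
    by_contra hne
    push Not at hne
    refine hνU (measure_mono_null ?_ key)
    intro u hu
    refine ⟨subset_closure ⟨0, u, hu, ?_⟩, hne u hu⟩
    simp [S, iterZ_zero']
  obtain ⟨u, hu, hcl⟩ := hex
  obtain ⟨q, ⟨hq1, hq2⟩, n, w, hw, rfl⟩ := mem_closure_iff.1 hcl (Metric.ball x ε ×ˢ U)
    (Metric.isOpen_ball.prod hUo) ⟨Metric.mem_ball_self hε, hu⟩
  exact ⟨w, n, hq1, fun i => ⟨hw i trivial, hq2 i trivial⟩⟩
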